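/- Let R be a commutative ring and M an R-module. Then M is admissibly Ind-projective if and only if every finite subset of M is contained in a submodule of M that is finitely generated, projective, and pure in M. (Lemma B.1(2) of the appendix by Štovíček and Trlifaj, characterizing the essential image of Indᵃ(P_f(R)) in Mod(R).) -/

import Mathlib

universe u

/-- A presentation of `M` as an admissible Ind-object of the category of finitely
generated projective `R`-modules: a directed poset `I` and a monotone family of
submodules `P i ⊆ M` with union `M`, each finitely generated projective, such that
each inclusion `P i ⊆ P j` (for `i ≤ j`) admits an `R`-linear retraction. -/
structure AdmissibleIndPresentation (R : Type u) [Ring R] (M : Type u) [AddCommGroup M]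
    [Module R M] : Type (u + 1) where
  I : Type u
  [ord : PartialOrder I]
  directed : IsDirected I (· ≤ ·)
  P : I → Submodule R M
  mono : Monotone P
  covers : ∀ x : M, ∃ i, x ∈ P i
  fg : ∀ i, (P i).FG
  proj : ∀ i, Module.Projective R (P i)
  splits : ∀ i j, (h : i ≤ j) →
    ∃ r : (P j) →ₗ[R] (P i), ∀ v : P i, r (Submodule.inclusion (mono h) v) = v

/-- `M` is admissibly Ind-projective if it admits a presentation as an admissible
Ind-object of finitely generated projective modules. -/
def IsAdmissiblyIndProjective (R : Type u) [Ring R] (M : Type u) [AddCommGroup M]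
    [Module R M] : Prop :=
  Nonempty (AdmissibleIndPresentation R M)

/-- A submodule `N ⊆ M` is pure if for every `R`-module `Q` the induced map
`Q ⊗[R] N → Q ⊗[R] M` is injective. -/
def IsPureSubmodule {R : Type u} [CommRing R] {M : Type u} [AddCommGroup M] [Module R M]
    (N : Submodule R M) : Prop :=
  ∀ (Q : Type u) [AddCommGroup Q] [Module R Q],
    Function.Injective (LinearMap.lTensor Q N.subtype)

/-!
The `P i` of an admissible presentation are pure in `M`: an element of `Q ⊗ P i` that vanishes in
`Q ⊗ M` already vanishes in `Q ⊗ K` for some finitely generated `K ⊇ P i`, such a `K` lies in some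
`P l`, and `P i` is a direct summand of `P l`.

Conversely, let `N ≤ L` be finitely generated projective pure submodules of `M`. Then `N` is pure in
`L`, and the quotient of a flat module by a pure submodule is flat, so `L ⧸ N` is flat and finitely
presented. Hence `L ⧸ N` is projective and `N` is a direct summand of `L`. So the finitely generated
projective pure submodules, ordered by inclusion, present `M` as soon as they absorb its finite
subsets.
-/

theorem lTensor_rTensor_comm {R N M Q Q' : Type*} [CommSemiring R] [AddCommMonoid N] [Module R N]
    [AddCommMonoid M] [Module R M] [AddCommMonoid Q] [Module R Q] [AddCommMonoid Q'] [Module R Q']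
    (f : N →ₗ[R] M) (φ : Q →ₗ[R] Q') (t : TensorProduct R Q N) :
    f.lTensor Q' (φ.rTensor N t) = φ.rTensor M (f.lTensor Q t) := by
  rw [← LinearMap.comp_apply, LinearMap.lTensor_comp_rTensor, ← LinearMap.rTensor_comp_lTensor,
    LinearMap.comp_apply]

section UniversallyInjective

variable {R : Type u} [CommRing R] {N M P : Type*} [AddCommGroup N] [Module R N]
  [AddCommGroup M] [Module R M] [AddCommGroup P] [Module R P]

/-- A linear map is universally injective if it stays injective after tensoring with any module `Q`.
As in `IsPureSubmodule`, which is the case of a submodule inclusion, `Q` ranges over the universe of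
`R`. -/
def IsUniversallyInjective (f : N →ₗ[R] M) : Prop :=
  ∀ (Q : Type u) [AddCommGroup Q] [Module R Q], Function.Injective (f.lTensor Q)

namespace IsUniversallyInjective

theorem of_comp {g : M →ₗ[R] P} {f : N →ₗ[R] M} (h : IsUniversallyInjective (g ∘ₗ f)) :
    IsUniversallyInjective f := by
  intro Q _ _
  have hQ := h Q
  rw [LinearMap.lTensor_comp, LinearMap.coe_comp] at hQ
  exact hQ.of_comp

theorem of_leftInverse {f : N →ₗ[R] M} {r : M →ₗ[R] N} (h : Function.LeftInverse r f) :
    IsUniversallyInjective f := by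
  have hid : IsUniversallyInjective (r ∘ₗ f) := by
    intro Q _ _
    rw [show r ∘ₗ f = LinearMap.id from LinearMap.ext h, LinearMap.lTensor_id]
    exact Function.injective_id
  exact hid.of_comp

open scoped TensorProduct in
theorem injective {f : N →ₗ[R] M} (hf : IsUniversallyInjective f) : Function.Injective f := by
  intro x y hxy
  have htmul : f.lTensor R (1 ⊗ₜ x) = f.lTensor R (1 ⊗ₜ y) := by
    rw [LinearMap.lTensor_tmul, LinearMap.lTensor_tmul, hxy]
  simpa only [TensorProduct.lid_tmul, one_smul] using congrArg (TensorProduct.lid R N) (hf R htmul)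

-- The chase takes place in the diagram obtained by tensoring `N → M → P → 0` with
-- `0 → Q → Q' → Q' ⧸ Q → 0`; `hf` is applied to `Q' ⧸ Q` and flatness of `M` to `Q → Q'`.
theorem flat_of_exact [Module.Flat R M] {f : N →ₗ[R] M} {g : M →ₗ[R] P}
    (hf : IsUniversallyInjective f) (hfg : Function.Exact f g) (hg : Function.Surjective g) :
    Module.Flat R P := by
  refine Module.Flat.iff_rTensor_preserves_injective_linearMap'.{u}.2 fun Q Q' _ _ _ _ φ hφ ↦ ?_
  rw [injective_iff_map_eq_zero]
  intro z hz
  obtain ⟨w, rfl⟩ := LinearMap.lTensor_surjective Q hg z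
  let π := (LinearMap.range φ).mkQ
  have hφπ : Function.Exact φ π := φ.exact_map_mkQ_range
  have hπ : Function.Surjective π := (LinearMap.range φ).mkQ_surjective
  obtain ⟨v, hv⟩ : ∃ v, f.lTensor Q' v = φ.rTensor M w := by
    refine (lTensor_exact Q' hfg hg _).1 ?_
    rwa [lTensor_rTensor_comm]
  have hπv : π.rTensor N v = 0 := by
    refine (map_eq_zero_iff _ (hf _)).1 ?_
    rw [lTensor_rTensor_comm, hv]
    exact (rTensor_exact M hφπ hπ).apply_apply_eq_zero w
  obtain ⟨u, rfl⟩ := (rTensor_exact N hφπ hπ v).1 hπv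
  have hw : f.lTensor Q u = w := by
    refine Module.Flat.rTensor_preserves_injective_linearMap φ hφ ?_
    rw [← hv, lTensor_rTensor_comm]
  rw [← hw]
  exact (lTensor_exact Q hfg hg).apply_apply_eq_zero u

theorem exists_leftInverse [Module.Finite R N] [Module.Flat R M] [Module.FinitePresentation R M]
    {f : N →ₗ[R] M} (hf : IsUniversallyInjective f) :
    ∃ r : M →ₗ[R] N, Function.LeftInverse r f := by
  let C := M ⧸ LinearMap.range f
  have hexact : Function.Exact f (LinearMap.range f).mkQ := f.exact_map_mkQ_range
  have hsurj := (LinearMap.range f).mkQ_surjective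
  have : Module.Flat R C := hf.flat_of_exact hexact hsurj
  have : Module.FinitePresentation R C :=
    Module.finitePresentation_of_surjective _ hsurj (by
      rw [Submodule.ker_mkQ]
      exact Submodule.fg_range f)
  have : Module.Projective R C := Module.Flat.projective_of_finitePresentation
  have hsection := Module.projective_lifting_property (LinearMap.range f).mkQ LinearMap.id hsurj
  obtain ⟨r, hr⟩ := ((hexact.split_tfae hf.injective hsurj).out 0 1).1 hsection
  exact ⟨r, LinearMap.congr_fun hr⟩

end IsUniversallyInjective

end UniversallyInjective

section Pure

variable {R : Type u} [CommRing R] {M : Type u} [AddCommGroup M] [Module R M]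

theorem IsPureSubmodule.isUniversallyInjective_inclusion {N L : Submodule R M}
    (hN : IsPureSubmodule N) (hle : N ≤ L) :
    IsUniversallyInjective (Submodule.inclusion hle) :=
  IsUniversallyInjective.of_comp (g := L.subtype) hN

theorem isPureSubmodule_of_forall_fg {N : Submodule R M} (hN : N.FG)
    (h : ∀ K : Submodule R M, K.FG → ∀ hle : N ≤ K,
      IsUniversallyInjective (Submodule.inclusion hle)) :
    IsPureSubmodule N := by
  intro Q _ _
  rw [LinearMap.lTensor_inj_iff_rTensor_inj, injective_iff_map_eq_zero]
  intro t ht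
  obtain ⟨K, hle, hK, hzero⟩ := TensorProduct.eq_zero_of_fg_of_subtype_eq_zero hN ht
  have hinj := (LinearMap.lTensor_inj_iff_rTensor_inj Q _).1 (h K hK hle Q)
  exact (map_eq_zero_iff _ hinj).1 hzero

end Pure

namespace AdmissibleIndPresentation

attribute [local instance] ord

section Ring

variable {R : Type u} [Ring R] {M : Type u} [AddCommGroup M] [Module R M]

theorem exists_le_of_fg (A : AdmissibleIndPresentation R M) {K : Submodule R M} (hK : K.FG) :
    ∃ i, K ≤ A.P i := by
  obtain ⟨s, rfl⟩ := hK
  have := A.directed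
  have : Nonempty A.I := ⟨(A.covers 0).choose⟩
  have hdir : Directed (· ⊆ ·) fun i ↦ (A.P i : Set M) := Monotone.directed_le A.mono
  obtain ⟨i, hi⟩ := hdir.exists_mem_subset_of_finset_subset_biUnion
    fun x (_ : x ∈ (s : Set M)) ↦ Set.mem_iUnion.2 (A.covers x)
  exact ⟨i, Submodule.span_le.2 hi⟩

end Ring

variable {R : Type u} [CommRing R] {M : Type u} [AddCommGroup M] [Module R M]

theorem isPureSubmodule (A : AdmissibleIndPresentation R M) (i : A.I) :
    IsPureSubmodule (A.P i) := by
  refine isPureSubmodule_of_forall_fg (A.fg i) fun K hK hle ↦ ?_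
  obtain ⟨j, hj⟩ := A.exists_le_of_fg hK
  have := A.directed
  obtain ⟨l, hil, hjl⟩ := exists_ge_ge i j
  obtain ⟨r, hr⟩ := A.splits i l hil
  have hsplit : IsUniversallyInjective (Submodule.inclusion (A.mono hil)) := .of_leftInverse hr
  exact .of_comp (g := Submodule.inclusion (hj.trans (A.mono hjl))) hsplit

/-- The presentation of `M` by all its finitely generated projective pure submodules, ordered by
inclusion. -/
def ofFGProjectivePure
    (h : ∀ s : Finset M, ∃ N : Submodule R M,
      (s : Set M) ⊆ N ∧ N.FG ∧ Module.Projective R N ∧ IsPureSubmodule N) :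
    AdmissibleIndPresentation R M where
  I := {N : Submodule R M // N.FG ∧ Module.Projective R N ∧ IsPureSubmodule N}
  directed := by
    refine ⟨fun ⟨N₁, h₁, _⟩ ⟨N₂, h₂, _⟩ ↦ ?_⟩
    obtain ⟨s, hs⟩ := h₁.sup h₂
    obtain ⟨N, hsN, hN⟩ := h s
    have hle : N₁ ⊔ N₂ ≤ N := hs ▸ Submodule.span_le.2 hsN
    exact ⟨⟨N, hN⟩, le_sup_left.trans hle, le_sup_right.trans hle⟩
  P := Subtype.val
  mono := Subtype.mono_coe _
  covers x := by
    obtain ⟨N, hxN, hN⟩ := h {x}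
    exact ⟨⟨N, hN⟩, hxN (Finset.mem_coe.2 (Finset.mem_singleton_self x))⟩
  fg N := N.2.1
  proj N := N.2.2.1
  splits := by
    rintro ⟨N, hN, _, hpure⟩ ⟨L, hL, _, _⟩ hle
    have : Module.Finite R N := .of_fg hN
    have : Module.Finite R L := .of_fg hL
    have : Module.FinitePresentation R L := Module.finitePresentation_of_projective R L
    exact (hpure.isUniversallyInjective_inclusion hle).exists_leftInverse

end AdmissibleIndPresentation

/-- **Lemma B.1(2)**: `M` is admissibly Ind-projective iff every finite subset of `M`
is contained in a finitely generated, projective, pure submodule of `M`. -/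
theorem isAdmissiblyIndProjective_iff_finsets_contained_in_fg_projective_pure
    (R : Type u) [CommRing R] (M : Type u) [AddCommGroup M] [Module R M] :
    IsAdmissiblyIndProjective R M ↔
      ∀ s : Finset M, ∃ N : Submodule R M,
        (s : Set M) ⊆ (N : Set M) ∧
        N.FG ∧
        Module.Projective R N ∧
        IsPureSubmodule N := by
  constructor
  · rintro ⟨A⟩ s
    obtain ⟨i, hi⟩ := A.exists_le_of_fg (Submodule.fg_span s.finite_toSet)
    exact ⟨A.P i, Submodule.span_le.1 hi, A.fg i, A.proj i, A.isPureSubmodule i⟩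
  · intro h
    exact ⟨.ofFGProjectivePure h⟩
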